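/- Let f = Y³ + X² + X³ in the polynomial ring F_2[X, Y] over the field with two elements. Then the quotient ring F_2[X, Y]/J, where J is the ideal generated by the two partial derivatives ∂f/∂X and ∂f/∂Y, is a 4-dimensional vector space over F_2. (Explicitly, in characteristic 2 one has ∂f/∂X = X² and ∂f/∂Y = Y², so J = (X², Y²) and the quotient has basis 1, X, Y, XY.) -/

import Mathlib

open MvPolynomial

section MonomialIdeal

variable {σ R : Type*}

lemma isCompl_restrictSupport [CommSemiring R] {s t : Set (σ →₀ ℕ)} (h : IsCompl s t) :
    IsCompl (restrictSupport R s) (restrictSupport R t) := by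
  constructor
  · rw [Submodule.disjoint_def]
    intro p hs ht
    rw [← support_eq_empty, ← Finset.coe_eq_empty]
    exact Set.subset_empty_iff.mp (h.disjoint hs ht)
  · have union_eq_univ : s ∪ t = Set.univ := h.sup_eq_top
    rw [codisjoint_iff, restrictSupport_eq_span, restrictSupport_eq_span, ← Submodule.span_union,
      ← Set.image_union, ← restrictSupport_eq_span, union_eq_univ, restrictSupport_univ]

lemma restrictScalars_span_monomial_image [CommSemiring R] (s : Set (σ →₀ ℕ)) :
    (Ideal.span ((fun m => monomial m (1 : R)) '' s)).restrictScalars R =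
      restrictSupport R (upperClosure s : Set (σ →₀ ℕ)) := by
  ext p
  rw [Submodule.restrictScalars_mem, mem_ideal_span_monomial_image, mem_restrictSupport_iff]
  rfl

/-- The standard monomial basis of the quotient by a monomial ideal: it is indexed by the exponents
that dominate no exponent of a generator, i.e. by the monomials outside the ideal. -/
noncomputable def basisQuotientSpanMonomial [CommRing R] (s : Set (σ →₀ ℕ)) :
    Module.Basis ((upperClosure s : Set (σ →₀ ℕ))ᶜ : Set (σ →₀ ℕ)) R
      (MvPolynomial σ R ⧸ Ideal.span ((fun m => monomial m (1 : R)) '' s)) :=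
  (basisRestrictSupport R _).map <| LinearEquiv.symm <|
    (Submodule.Quotient.restrictScalarsEquiv R _).symm ≪≫ₗ
      Submodule.quotEquivOfEq _ _ (restrictScalars_span_monomial_image s) ≪≫ₗ
      Submodule.quotientEquivOfIsCompl _ _ (isCompl_restrictSupport isCompl_compl)

lemma compl_upperClosure_range_single (n : σ → ℕ) :
    (upperClosure (Set.range fun i => Finsupp.single i (n i)) : Set (σ →₀ ℕ))ᶜ =
      {m | ∀ i, m i < n i} := by
  ext m
  simp

lemma card_finsupp_forall_lt [Fintype σ] (n : σ → ℕ) :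
    Nat.card {m : σ →₀ ℕ | ∀ i, m i < n i} = ∏ i, n i := by
  let boxEquiv : {m : σ →₀ ℕ // ∀ i, m i < n i} ≃ ∀ i, Fin (n i) :=
    (Finsupp.equivFunOnFinite.subtypeEquiv fun _ => Iff.rfl).trans <|
      Equiv.subtypePiEquivPi.trans <| Equiv.piCongrRight fun _ => Fin.equivSubtype.symm
  calc Nat.card {m : σ →₀ ℕ | ∀ i, m i < n i}
    _ = Nat.card (∀ i, Fin (n i)) := Nat.card_congr boxEquiv
    _ = ∏ i, n i := by simp only [Nat.card_pi, Nat.card_fin]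

theorem finrank_quotient_span_X_pow [CommRing R] [Nontrivial R] [Fintype σ] (n : σ → ℕ) :
    Module.finrank R (MvPolynomial σ R ⧸ Ideal.span (Set.range fun i => X (R := R) i ^ n i)) =
      ∏ i, n i := by
  have range_X_pow : (Set.range fun i => X (R := R) i ^ n i) =
      (fun m => monomial m (1 : R)) '' Set.range fun i => Finsupp.single i (n i) := by
    simp only [← Set.range_comp, Function.comp_def, X_pow_eq_monomial]
  rw [range_X_pow, Module.finrank_eq_nat_card_basis (basisQuotientSpanMonomial _),
    compl_upperClosure_range_single, card_finsupp_forall_lt]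

end MonomialIdeal

section CuspidalCubic

variable {R : Type*}

lemma pderiv_zero_cuspidalCubic [CommSemiring R] :
    pderiv 0 (X 1 ^ 3 + X 0 ^ 2 + X 0 ^ 3 : MvPolynomial (Fin 2) R) = 2 * X 0 + 3 * X 0 ^ 2 := by
  simp [pderiv_X, Derivation.leibniz_pow]

lemma pderiv_one_cuspidalCubic [CommSemiring R] :
    pderiv 1 (X 1 ^ 3 + X 0 ^ 2 + X 0 ^ 3 : MvPolynomial (Fin 2) R) = 3 * X 1 ^ 2 := by
  simp [pderiv_X, Derivation.leibniz_pow]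

theorem jacobian_quotient_dim_char_two_general [CommRing R] [CharP R 2] :
    let f : MvPolynomial (Fin 2) R := X 1 ^ 3 + X 0 ^ 2 + X 0 ^ 3
    let J : Ideal (MvPolynomial (Fin 2) R) := Ideal.span {pderiv 0 f, pderiv 1 f}
    Module.finrank R (MvPolynomial (Fin 2) R ⧸ J) = 4 := by
  intro f J
  have : Nontrivial R := CharP.nontrivial_of_char_ne_one (v := 2) (by decide)
  have two_eq_zero : (2 : MvPolynomial (Fin 2) R) = 0 := CharTwo.two_eq_zero
  have pderiv_zero : pderiv 0 f = X 0 ^ 2 := by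
    linear_combination pderiv_zero_cuspidalCubic (R := R) + (X 0 + X 0 ^ 2) * two_eq_zero
  have pderiv_one : pderiv 1 f = X 1 ^ 2 := by
    linear_combination pderiv_one_cuspidalCubic (R := R) + X 1 ^ 2 * two_eq_zero
  have J_eq : J = Ideal.span (Set.range fun i => X i ^ 2) := by
    simp [J, pderiv_zero, pderiv_one, Fin.range_fin_succ, Fin.tail]
  rw [J_eq, finrank_quotient_span_X_pow fun _ => 2]
  rfl

end CuspidalCubic

/-- For `f = Y³ + X² + X³` over `F_2`, the Jacobian quotient `F_2[X,Y]/(∂f/∂X, ∂f/∂Y)`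
is a 4-dimensional `F_2`-vector space. -/
theorem jacobian_quotient_dim_char_two :
    let f : MvPolynomial (Fin 2) (ZMod 2) := X 1 ^ 3 + X 0 ^ 2 + X 0 ^ 3
    let J : Ideal (MvPolynomial (Fin 2) (ZMod 2)) :=
      Ideal.span {pderiv 0 f, pderiv 1 f}
    Module.finrank (ZMod 2) (MvPolynomial (Fin 2) (ZMod 2) ⧸ J) = 4 :=
  jacobian_quotient_dim_char_two_general
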